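/- arXiv:math/0506281 — 2 statements merged into one kernel-verified Lean document; each statement's English description precedes it below -/
import Mathlib

section
/- Let G be a finite simple graph on vertex set {v_1,...,v_n} and let R+A denote its edge cone in R^n. If A is an independent set of vertices of G, then every point x of the edge cone satisfies ∑_{v_i ∈ A} x_i ≤ ∑_{v_i ∈ N(A)} x_i; consequently the set F = R+A ∩ H_A is a face of the edge cone (hence either a proper face or equal to R+A). -/
open Finset

/-- The edge vector `e_i + e_j` associated to an edge `{i, j}`. -/
def edgeVector {V : Type*} [DecidableEq V] (i j : V) : V → ℝ :=
  fun k => (if k = i then 1 else 0) + (if k = j then 1 else 0)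

/-- The edge cone of a graph `G`: all nonnegative real linear combinations of the
edge vectors of `G`. -/
def edgeCone {V : Type*} [Fintype V] [DecidableEq V] (G : SimpleGraph V) :
    Set (V → ℝ) :=
  { x | ∃ c : V → V → ℝ, (∀ i j, 0 ≤ c i j) ∧ (∀ i j, ¬ G.Adj i j → c i j = 0) ∧
        x = ∑ i, ∑ j, c i j • edgeVector i j }

/-- The neighbor set `N(A)`: vertices adjacent to at least one vertex of `A`. -/
def nbr {V : Type*} [Fintype V] [DecidableEq V] (G : SimpleGraph V)
    [DecidableRel G.Adj] (A : Finset V) : Finset V :=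
  Finset.univ.filter fun v => ∃ a ∈ A, G.Adj v a

/-- `A` is an independent set of vertices of `G`. -/
def IsIndep {V : Type*} (G : SimpleGraph V) (A : Finset V) : Prop :=
  ∀ a ∈ A, ∀ b ∈ A, ¬ G.Adj a b

/-- `F` is a face of the cone `Q`: `F = Q ∩ {x | ⟪x, a⟫ = 0}` for some `a` with
`Q ⊆ {x | ⟪x, a⟫ ≤ 0}`. -/
def IsFace {V : Type*} [Fintype V] (Q F : Set (V → ℝ)) : Prop :=
  ∃ a : V → ℝ, (∀ x ∈ Q, ∑ i, x i * a i ≤ 0) ∧ F = Q ∩ {x | ∑ i, x i * a i = 0}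

/-- `F` is a facet of the cone `Q`: a face whose linear span has dimension one less
than the dimension of the linear span of `Q`. -/
def IsFacet {V : Type*} [Fintype V] (Q F : Set (V → ℝ)) : Prop :=
  IsFace Q F ∧
    Module.finrank ℝ (Submodule.span ℝ F) = Module.finrank ℝ (Submodule.span ℝ Q) - 1

/-!
Exchanging the two ends of an edge carries its ends in `A` to ends in `N(A)`, so every edge vector
satisfies the inequality. Linearity extends it to the edge cone, and the functional
`x ↦ ∑_A x - ∑_{N(A)} x` then cuts out a face.
-/

/-- The linear functional adding up the coordinates indexed by `A`; it packages each side of the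
equation defining `H_A` as a linear map. -/
def coordSum (R : Type*) {ι : Type*} [Semiring R] (A : Finset ι) : (ι → R) →ₗ[R] R :=
  ∑ i ∈ A, LinearMap.proj i

lemma coordSum_apply {R ι : Type*} [Semiring R] (A : Finset ι) (x : ι → R) :
    coordSum R A x = ∑ i ∈ A, x i := by
  simp [coordSum]

lemma isFace_inter_setOf_eq {V : Type*} [Fintype V] {Q : Set (V → ℝ)} {f g : (V → ℝ) →ₗ[ℝ] ℝ}
    (hfg : ∀ x ∈ Q, f x ≤ g x) : IsFace Q (Q ∩ {x | f x = g x}) := by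
  classical
  have sum_coeff (x : V → ℝ) : ∑ i, x i * (f - g) (fun j => if i = j then 1 else 0) = f x - g x :=
    ((f - g).pi_apply_eq_sum_univ x).symm
  refine ⟨fun i => (f - g) (fun j => if i = j then 1 else 0), fun x hx => ?_, ?_⟩
  · rw [sum_coeff]
    exact sub_nonpos.mpr (hfg x hx)
  · simp only [sum_coeff, sub_eq_zero]

lemma map_le_map_of_mem_edgeCone {V M : Type*} [Fintype V] [DecidableEq V]
    [AddCommMonoid M] [PartialOrder M] [IsOrderedAddMonoid M] [Module ℝ M] [PosSMulMono ℝ M]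
    {G : SimpleGraph V} {f g : (V → ℝ) →ₗ[ℝ] M}
    (hfg : ∀ i j, G.Adj i j → f (edgeVector i j) ≤ g (edgeVector i j))
    {x : V → ℝ} (hx : x ∈ edgeCone G) : f x ≤ g x := by
  obtain ⟨c, hc_nonneg, hc_zero, rfl⟩ := hx
  simp only [map_sum, map_smul]
  refine sum_le_sum fun i _ => sum_le_sum fun j _ => ?_
  by_cases hij : G.Adj i j
  · exact smul_le_smul_of_nonneg_left (hfg i j hij) (hc_nonneg i j)
  · simp only [hc_zero i j hij, zero_smul, le_refl]

lemma sum_edgeVector {V : Type*} [DecidableEq V] (A : Finset V) (i j : V) :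
    ∑ k ∈ A, edgeVector i j k = (if i ∈ A then 1 else 0) + (if j ∈ A then 1 else 0) := by
  simp only [edgeVector, sum_add_distrib, sum_ite_eq']

section Neighbors

variable {V : Type*} [Fintype V] [DecidableEq V] {G : SimpleGraph V} [DecidableRel G.Adj]
  {A : Finset V}

lemma mem_nbr_of_adj {v a : V} (hva : G.Adj v a) (ha : a ∈ A) : v ∈ nbr G A :=
  mem_filter.mpr ⟨mem_univ v, a, ha, hva⟩

lemma sum_edgeVector_le_sum_nbr {i j : V} (hij : G.Adj i j) :
    ∑ k ∈ A, edgeVector i j k ≤ ∑ k ∈ nbr G A, edgeVector i j k := by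
  have indicator_le {v a : V} (hva : G.Adj v a) :
      (if a ∈ A then 1 else 0 : ℝ) ≤ if v ∈ nbr G A then 1 else 0 := by
    have mem_nbr : a ∈ A → v ∈ nbr G A := mem_nbr_of_adj hva
    split_ifs <;> simp_all
  rw [sum_edgeVector, sum_edgeVector, add_comm]
  exact add_le_add (indicator_le hij) (indicator_le hij.symm)

lemma sum_le_sum_nbr_of_mem_edgeCone {x : V → ℝ} (hx : x ∈ edgeCone G) :
    ∑ i ∈ A, x i ≤ ∑ i ∈ nbr G A, x i := by
  simp only [← coordSum_apply]
  refine map_le_map_of_mem_edgeCone (fun i j hij => ?_) hx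
  simpa only [coordSum_apply] using sum_edgeVector_le_sum_nbr hij

end Neighbors

theorem stmt1_general {V : Type*} [Fintype V] [DecidableEq V] (G : SimpleGraph V)
    [DecidableRel G.Adj] (A : Finset V) :
    (∀ x ∈ edgeCone G, ∑ i ∈ A, x i ≤ ∑ i ∈ nbr G A, x i) ∧
    IsFace (edgeCone G) (edgeCone G ∩ {x : V → ℝ | ∑ i ∈ A, x i = ∑ i ∈ nbr G A, x i}) := by
  have sum_le : ∀ x ∈ edgeCone G, ∑ i ∈ A, x i ≤ ∑ i ∈ nbr G A, x i :=
    fun _ hx => sum_le_sum_nbr_of_mem_edgeCone hx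
  refine ⟨sum_le, ?_⟩
  simp only [← coordSum_apply] at sum_le ⊢
  exact isFace_inter_setOf_eq sum_le

/-- If `A` is an independent set of vertices of `G`, then every point of the edge cone
satisfies `∑_{v_i ∈ A} x_i ≤ ∑_{v_i ∈ N(A)} x_i`; consequently
`F = ℝ₊𝒜 ∩ H_A` is a face of the edge cone. -/
theorem stmt1 {n : ℕ} (G : SimpleGraph (Fin n)) [DecidableRel G.Adj]
    (A : Finset (Fin n)) (hA : IsIndep G A) :
    (∀ x ∈ edgeCone G, ∑ i ∈ A, x i ≤ ∑ i ∈ nbr G A, x i) ∧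
    IsFace (edgeCone G)
      (edgeCone G ∩ {x : Fin n → ℝ | ∑ i ∈ A, x i = ∑ i ∈ nbr G A, x i}) :=
  stmt1_general G A
end

section
/- Let G be an arbitrary finite simple graph on vertex set V = {v_1,...,v_n}. Then a vector x = (x_1,...,x_n) ∈ R^n belongs to the edge cone R+A of G if and only if x is a solution of the system of linear inequalities: -x_i ≤ 0 for i = 1,...,n, and ∑_{v_i ∈ A} x_i - ∑_{v_i ∈ N(A)} x_i ≤ 0 for every independent set of vertices A ⊆ V. -/
open Finset

/-!
Weak duality is immediate: a functional `y` is nonnegative on the edge cone iff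
`0 ≤ y i + y j` on every edge, and both the coordinate functionals and `1_{N(A)} - 1_A` have this
property. For the converse, the edge cone is closed because the weights of a combination are bounded
by its entries, so by Farkas' lemma it suffices that every such `y` satisfies
`0 ≤ ∑ i, x i * y i`. For `0 < t` the set `{y ≤ -t}` is independent and its neighbors lie in
`{t ≤ y}`, so the inequality for this set says that the `x`-weight of `{t ≤ y⁻}` is at most that of
`{t ≤ y⁺}`; integrating over `t` gives `∑ i, x i * y⁻ i ≤ ∑ i, x i * y⁺ i`.
-/

section LayerCake

variable {ι : Type*} [Fintype ι]

lemma sum_superlevel_eq_sum_indicator (w f : ι → ℝ) :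
    (fun t => ∑ i with t ≤ f i, w i) =
      fun t => ∑ i, {s | s ≤ f i}.indicator (fun _ => w i) t := by
  simp only [Set.indicator_apply, Set.mem_ofPred_eq, sum_filter]

lemma intervalIntegrable_indicator_le_const (c r a b : ℝ) :
    IntervalIntegrable ({s | s ≤ c}.indicator fun _ => r) MeasureTheory.volume a b :=
  have h : IntervalIntegrable (fun _ => r) MeasureTheory.volume a b := intervalIntegrable_const
  ⟨h.1.indicator measurableSet_Iic, h.2.indicator measurableSet_Iic⟩

lemma intervalIntegrable_sum_superlevel (w f : ι → ℝ) (a b : ℝ) :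
    IntervalIntegrable (fun t => ∑ i with t ≤ f i, w i) MeasureTheory.volume a b := by
  rw [sum_superlevel_eq_sum_indicator]
  simpa only [Finset.sum_fn] using
    IntervalIntegrable.sum univ fun i _ => intervalIntegrable_indicator_le_const (f i) (w i) a b

lemma integral_sum_superlevel (w : ι → ℝ) {f : ι → ℝ} {M : ℝ} (hf : ∀ i, f i ∈ Set.Icc 0 M) :
    ∫ t in (0 : ℝ)..M, ∑ i with t ≤ f i, w i = ∑ i, w i * f i := by
  rw [sum_superlevel_eq_sum_indicator, intervalIntegral.integral_finsetSum
    fun i _ => intervalIntegrable_indicator_le_const _ _ _ _]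
  refine sum_congr rfl fun i _ => ?_
  rw [intervalIntegral.integral_indicator (hf i), intervalIntegral.integral_const, sub_zero,
    smul_eq_mul, mul_comm]

lemma sum_mul_le_sum_mul_of_sum_superlevel_le {w f g : ι → ℝ} (hf : 0 ≤ f) (hg : 0 ≤ g)
    (h : ∀ t > 0, ∑ i with t ≤ f i, w i ≤ ∑ i with t ≤ g i, w i) :
    ∑ i, w i * f i ≤ ∑ i, w i * g i := by
  have hfM : ∀ i, f i ∈ Set.Icc 0 (‖f‖ + ‖g‖) := fun i =>
    ⟨hf i, by linarith [Real.le_norm_self (f i), norm_le_pi_norm f i, norm_nonneg g]⟩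
  have hgM : ∀ i, g i ∈ Set.Icc 0 (‖f‖ + ‖g‖) := fun i =>
    ⟨hg i, by linarith [Real.le_norm_self (g i), norm_le_pi_norm g i, norm_nonneg f]⟩
  rw [← integral_sum_superlevel w hfM, ← integral_sum_superlevel w hgM]
  exact intervalIntegral.integral_mono_on_of_le_Ioo (by positivity)
    (intervalIntegrable_sum_superlevel _ _ _ _) (intervalIntegrable_sum_superlevel _ _ _ _)
    fun t ht => h t ht.1

lemma sum_mul_nonneg_of_sum_sublevel_neg_le {w y : ι → ℝ}
    (h : ∀ t > 0, ∑ i with y i ≤ -t, w i ≤ ∑ i with t ≤ y i, w i) :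
    0 ≤ ∑ i, w i * y i := by
  have le_posPart_iff : ∀ t > 0, ∀ i, t ≤ y⁺ i ↔ t ≤ y i := fun t ht i => by
    simp [Pi.posPart_apply, posPart_def, ht.not_ge]
  have le_negPart_iff : ∀ t > 0, ∀ i, t ≤ y⁻ i ↔ y i ≤ -t := fun t ht i => by
    simp [Pi.negPart_apply, negPart_def, ht.not_ge, le_neg]
  have key : ∑ i, w i * y⁻ i ≤ ∑ i, w i * y⁺ i :=
    sum_mul_le_sum_mul_of_sum_superlevel_le (negPart_nonneg y) (posPart_nonneg y) fun t ht => by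
      simpa only [le_posPart_iff t ht, le_negPart_iff t ht] using h t ht
  calc 0 ≤ ∑ i, w i * y⁺ i - ∑ i, w i * y⁻ i := sub_nonneg.2 key
    _ = ∑ i, w i * (y⁺ - y⁻) i := by simp only [Pi.sub_apply, mul_sub, sum_sub_distrib]
    _ = ∑ i, w i * y i := by rw [posPart_sub_negPart]

end LayerCake

lemma isClosed_image_of_norm_le_norm {E F : Type*} [SeminormedAddCommGroup E] [ProperSpace E]
    [NormedAddCommGroup F] {f : E → F} {s : Set E} (hs : IsClosed s) (hf : ContinuousOn f s)
    (hnorm : ∀ x ∈ s, ‖x‖ ≤ ‖f x‖) : IsClosed (f '' s) := by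
  have hcoe : Filter.Tendsto (fun x : s => ‖(x : E)‖) (Filter.cocompact s) Filter.atTop :=
    tendsto_norm_cocompact_atTop.comp hs.isClosedEmbedding_subtypeVal.tendsto_cocompact
  have hcobounded : Filter.Tendsto (s.domRestrict f) (Filter.cocompact s) (Bornology.cobounded F) :=
    tendsto_norm_atTop_iff_cobounded.1 <| Filter.tendsto_atTop_mono (fun x => hnorm x x.2) hcoe
  have hproper : IsProperMap (s.domRestrict f) := isProperMap_iff_tendsto_cocompact.2
    ⟨hf.domRestrict, hcobounded.mono_right Metric.cobounded_le_cocompact⟩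
  simpa only [Set.range_domRestrict] using hproper.isClosedMap.isClosed_range

lemma exists_sum_mul_neg_of_notMem_properCone {ι : Type*} [Fintype ι] (C : ProperCone ℝ (ι → ℝ))
    {x : ι → ℝ} (hx : x ∉ C) :
    ∃ y : ι → ℝ, (∀ z ∈ C, 0 ≤ ∑ i, z i * y i) ∧ ∑ i, x i * y i < 0 := by
  classical
  obtain ⟨f, hf, hfx⟩ := C.hyperplane_separation_point hx
  let y : ι → ℝ := fun i => f fun j => if i = j then 1 else 0
  have hfy : ∀ z, f z = ∑ i, z i * y i := f.toLinearMap.pi_apply_eq_sum_univ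
  exact ⟨y, fun z hz => hfy z ▸ hf z hz, hfy x ▸ hfx⟩

section EdgeCone

variable {V : Type*} (G : SimpleGraph V)

/-- The cone of nonnegative edge weightings of `G`. As in `edgeCone`, an edge `{i, j}` carries two
weights `c i j` and `c j i`, which need not agree. -/
def edgeWeights : PointedCone ℝ (V → V → ℝ) where
  carrier := {c | (∀ i j, 0 ≤ c i j) ∧ ∀ i j, ¬ G.Adj i j → c i j = 0}
  zero_mem' := ⟨fun _ _ => le_rfl, fun _ _ _ => rfl⟩
  add_mem' := fun ⟨hc, hcG⟩ ⟨hd, hdG⟩ =>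
    ⟨fun i j => add_nonneg (hc i j) (hd i j), fun i j hij => by simp [hcG i j hij, hdG i j hij]⟩
  smul_mem' := fun r _ ⟨hc, hcG⟩ =>
    ⟨fun i j => mul_nonneg r.2 (hc i j), fun i j hij => by simp [hcG i j hij]⟩

lemma isClosed_edgeWeights : IsClosed (edgeWeights G : Set (V → V → ℝ)) := by
  have h : (edgeWeights G : Set (V → V → ℝ)) =
      (⋂ i, ⋂ j, {c | 0 ≤ c i j}) ∩ ⋂ i, ⋂ j, ⋂ _ : ¬ G.Adj i j, {c | c i j = 0} := by
    ext c
    simp [edgeWeights]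
  rw [h]
  exact (isClosed_iInter fun i => isClosed_iInter fun j =>
      isClosed_le continuous_const (by fun_prop)).inter
    (isClosed_iInter fun i => isClosed_iInter fun j => isClosed_iInter fun _ =>
      isClosed_eq (by fun_prop) continuous_const)

/-- The dual cone of the edge cone of `G`, described by its inequalities: `y` is identified with
the functional `x ↦ ∑ i, x i * y i`, whose value at the edge vector of `{i, j}` is `y i + y j`. -/
def edgeConeDual : Set (V → ℝ) := {y | ∀ ⦃i j⦄, G.Adj i j → 0 ≤ y i + y j}

variable {G} in
lemma mem_edgeConeDual_of_nonneg {y : V → ℝ} (hy : 0 ≤ y) : y ∈ edgeConeDual G :=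
  fun i j _ => add_nonneg (hy i) (hy j)

variable {G} in
lemma isIndep_of_forall_neg {y : V → ℝ} (hy : y ∈ edgeConeDual G) {A : Finset V}
    (hA : ∀ i ∈ A, y i < 0) : IsIndep G A := fun i hi j hj hij =>
  (add_neg (hA i hi) (hA j hj)).not_ge (hy hij)

variable [Fintype V]

/-- The linear map sending an edge weighting `c` to the vector whose entry at `k` is the total
weight of the edges at `k`. -/
def weightedDegree : (V → V → ℝ) →ₗ[ℝ] V → ℝ where
  toFun c k := ∑ j, (c k j + c j k)
  map_add' c d := by
    ext k
    simp only [Pi.add_apply, ← sum_add_distrib]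
    exact sum_congr rfl fun j _ => add_add_add_comm _ _ _ _
  map_smul' r c := by
    ext k
    simp [mul_sum, mul_add]

lemma weightedDegree_apply (c : V → V → ℝ) (k : V) :
    weightedDegree c k = ∑ j, (c k j + c j k) := rfl

lemma sum_weightedDegree_mul (c : V → V → ℝ) (y : V → ℝ) :
    ∑ k, weightedDegree c k * y k = ∑ i, ∑ j, c i j * (y i + y j) := by
  simp only [weightedDegree_apply, sum_mul, add_mul, mul_add, sum_add_distrib]
  rw [sum_comm (f := fun k j => c j k * y k)]

variable {G} in
lemma norm_le_norm_weightedDegree {c : V → V → ℝ} (hc : c ∈ edgeWeights G) :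
    ‖c‖ ≤ ‖weightedDegree c‖ := by
  refine (pi_norm_le_iff_of_nonneg (norm_nonneg _)).2 fun i =>
    (pi_norm_le_iff_of_nonneg (norm_nonneg _)).2 fun j => ?_
  calc ‖c i j‖ = c i j := Real.norm_of_nonneg (hc.1 i j)
    _ ≤ c i j + c j i := le_add_of_nonneg_right (hc.1 j i)
    _ ≤ weightedDegree c i :=
      single_le_sum (f := fun j => c i j + c j i) (fun j _ => add_nonneg (hc.1 i j) (hc.1 j i))
        (mem_univ j)
    _ ≤ ‖weightedDegree c i‖ := Real.le_norm_self _
    _ ≤ ‖weightedDegree c‖ := norm_le_pi_norm _ i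

variable [DecidableEq V]

lemma sum_smul_edgeVector (c : V → V → ℝ) :
    ∑ i, ∑ j, c i j • edgeVector i j = weightedDegree c := by
  ext k
  simp [weightedDegree_apply, edgeVector, mul_add, sum_add_distrib]

lemma edgeCone_eq_image : edgeCone G = weightedDegree '' (edgeWeights G : Set (V → V → ℝ)) := by
  ext x
  simp only [edgeCone, sum_smul_edgeVector]
  exact ⟨fun ⟨c, hc, hcG, hx⟩ => ⟨c, ⟨hc, hcG⟩, hx.symm⟩, fun ⟨c, ⟨hc, hcG⟩, hx⟩ =>
    ⟨c, hc, hcG, hx.symm⟩⟩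

lemma isClosed_edgeCone : IsClosed (edgeCone G) := by
  rw [edgeCone_eq_image]
  exact isClosed_image_of_norm_le_norm (isClosed_edgeWeights G)
    (LinearMap.continuous_of_finiteDimensional weightedDegree).continuousOn
    fun _ => norm_le_norm_weightedDegree

/-- The edge cone as a `ProperCone`, the form in which Farkas' lemma is available. -/
def edgeProperCone : ProperCone ℝ (V → ℝ) where
  toSubmodule := (edgeWeights G).map weightedDegree
  isClosed' := by
    have h := isClosed_edgeCone G
    rwa [edgeCone_eq_image] at h

lemma mem_edgeProperCone {x : V → ℝ} : x ∈ edgeProperCone G ↔ x ∈ edgeCone G := by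
  rw [edgeCone_eq_image]; rfl

variable {G}

lemma edgeVector_mem_edgeCone {i j : V} (hij : G.Adj i j) : edgeVector i j ∈ edgeCone G := by
  refine ⟨fun k l => if k = i ∧ l = j then 1 else 0, fun k l => by positivity,
    fun k l hkl => if_neg ?_, ?_⟩
  · rintro ⟨rfl, rfl⟩
    exact hkl hij
  · simp [ite_and]

lemma sum_edgeVector_mul (i j : V) (y : V → ℝ) : ∑ k, edgeVector i j k * y k = y i + y j := by
  simp [edgeVector, add_mul, sum_add_distrib]

lemma sum_mul_nonneg_of_mem_edgeCone {x y : V → ℝ} (hx : x ∈ edgeCone G)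
    (hy : y ∈ edgeConeDual G) : 0 ≤ ∑ i, x i * y i := by
  rw [edgeCone_eq_image] at hx
  obtain ⟨c, ⟨hc, hcG⟩, rfl⟩ := hx
  rw [sum_weightedDegree_mul]
  refine sum_nonneg fun i _ => sum_nonneg fun j _ => ?_
  by_cases hij : G.Adj i j
  · exact mul_nonneg (hc i j) (hy hij)
  · rw [hcG i j hij, zero_mul]

theorem mem_edgeCone_iff_forall_mem_edgeConeDual {x : V → ℝ} :
    x ∈ edgeCone G ↔ ∀ y ∈ edgeConeDual G, 0 ≤ ∑ i, x i * y i := by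
  refine ⟨fun hx y hy => sum_mul_nonneg_of_mem_edgeCone hx hy, fun hx => ?_⟩
  by_contra hxG
  obtain ⟨y, hy, hxy⟩ := exists_sum_mul_neg_of_notMem_properCone (edgeProperCone G)
    (mt (mem_edgeProperCone G).1 hxG)
  have hy_dual : y ∈ edgeConeDual G := fun i j hij =>
    (hy _ ((mem_edgeProperCone G).2 (edgeVector_mem_edgeCone hij))).trans_eq
      (sum_edgeVector_mul i j y)
  exact hxy.not_ge (hx y hy_dual)

variable [DecidableRel G.Adj]

lemma mem_nbr {A : Finset V} {v : V} : v ∈ nbr G A ↔ ∃ a ∈ A, G.Adj v a := by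
  simp only [nbr, mem_filter_univ]

lemma indicator_nbr_sub_indicator_mem_edgeConeDual (A : Finset V) :
    (fun i => (if i ∈ nbr G A then 1 else 0) - if i ∈ A then 1 else 0) ∈ edgeConeDual G := by
  have hle : ∀ {i j}, G.Adj i j →
      (if i ∈ A then 1 else 0 : ℝ) ≤ if j ∈ nbr G A then 1 else 0 := fun {i j} hij => by
    by_cases hi : i ∈ A
    · rw [if_pos hi, if_pos (mem_nbr.2 ⟨i, hi, hij.symm⟩)]
    · rw [if_neg hi]
      positivity
  intro i j hij
  linarith [hle hij, hle hij.symm]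

lemma le_of_mem_nbr {y : V → ℝ} (hy : y ∈ edgeConeDual G) {A : Finset V} {t : ℝ}
    (hA : ∀ i ∈ A, y i ≤ -t) {j : V} (hj : j ∈ nbr G A) : t ≤ y j := by
  obtain ⟨i, hi, hji⟩ := mem_nbr.1 hj
  linarith [hy hji, hA i hi]

theorem sum_mul_nonneg_of_sum_le_sum_nbr {x y : V → ℝ} (hx : 0 ≤ x)
    (hA : ∀ A, IsIndep G A → ∑ i ∈ A, x i ≤ ∑ i ∈ nbr G A, x i) (hy : y ∈ edgeConeDual G) :
    0 ≤ ∑ i, x i * y i := by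
  refine sum_mul_nonneg_of_sum_sublevel_neg_le fun t ht => ?_
  have hle : ∀ i ∈ ({i | y i ≤ -t} : Finset V), y i ≤ -t := fun i => (mem_filter_univ i).1
  have hindep : IsIndep G ({i | y i ≤ -t} : Finset V) :=
    isIndep_of_forall_neg hy fun i hi => (hle i hi).trans_lt (neg_neg_of_pos ht)
  have hsub : nbr G {i | y i ≤ -t} ⊆ ({i | t ≤ y i} : Finset V) := fun j hj =>
    (mem_filter_univ j).2 (le_of_mem_nbr hy hle hj)
  exact (hA _ hindep).trans (sum_le_sum_of_subset_of_nonneg hsub fun i _ _ => hx i)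

end EdgeCone

theorem stmt4_general {V : Type*} [Fintype V] [DecidableEq V] (G : SimpleGraph V)
    [DecidableRel G.Adj] (x : V → ℝ) :
    x ∈ edgeCone G ↔
      (∀ i, -x i ≤ 0) ∧
      ∀ A : Finset V, IsIndep G A → ∑ i ∈ A, x i - ∑ i ∈ nbr G A, x i ≤ 0 := by
  simp only [neg_nonpos, sub_nonpos]
  rw [mem_edgeCone_iff_forall_mem_edgeConeDual]
  refine ⟨fun h => ⟨fun i => ?_, fun A _ => ?_⟩, fun ⟨hx, hA⟩ y hy =>
    sum_mul_nonneg_of_sum_le_sum_nbr hx hA hy⟩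
  · simpa [Pi.single_apply] using
      h _ (mem_edgeConeDual_of_nonneg (y := Pi.single i 1) (Pi.single_nonneg.2 zero_le_one))
  · simpa [mul_sub] using h _ (indicator_nbr_sub_indicator_mem_edgeConeDual A)

/-- For an arbitrary graph `G`, a vector `x ∈ ℝⁿ` belongs to the edge cone of `G` if and
only if `-x_i ≤ 0` for all `i` and `∑_{v_i ∈ A} x_i - ∑_{v_i ∈ N(A)} x_i ≤ 0` for every
independent set of vertices `A` of `G`. -/
theorem stmt4 {n : ℕ} (G : SimpleGraph (Fin n)) [DecidableRel G.Adj]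
    (x : Fin n → ℝ) :
    x ∈ edgeCone G ↔
      (∀ i, -x i ≤ 0) ∧
      ∀ A : Finset (Fin n), IsIndep G A →
        ∑ i ∈ A, x i - ∑ i ∈ nbr G A, x i ≤ 0 :=
  stmt4_general G x
end
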